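/- arXiv:1001.2381 — 2 statements merged into one kernel-verified Lean document; each statement's English description precedes it below -/
import Mathlib

section
/- Let T > 0 and let x and x_n (n ∈ ℕ) be càdlàg functions on [0,T]. Suppose x_n → x in M₁, i.e., there exist parametric representations (u_n⁰, r_n⁰) ∈ Π(x_n) and (u⁰, r⁰) ∈ Π(x) with max(‖u_n⁰ − u⁰‖, ‖r_n⁰ − r⁰‖) → 0. Then there exist parametric representations (u, r) ∈ Π(x) and (u_n, r_n) ∈ Π(x_n) with max(‖u_n − u‖, ‖r_n − r‖) → 0 such that r and every r_n are absolutely continuous with respect to Lebesgue measure on [0,1], with derivatives r′ and r′_n satisfying ‖r′_n − r′‖₁ → 0 as n → ∞, ess sup |r′| < ∞, and sup_{n≥1} ess sup |r′_n| < ∞. (Theorem 1.2.) -/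
open Set Filter MeasureTheory Topology

/-- The left limit of `x` at `t`, with the convention `x(0−) = x(0)`. -/
noncomputable def leftL (x : ℝ → ℝ) (t : ℝ) : ℝ :=
  if t = 0 then x 0 else Function.leftLim x t

/-- `x` is càdlàg on `[0, T]`: right-continuous on `[0, T)` and with left limits on `(0, T]`. -/
def IsCadlagOn (T : ℝ) (x : ℝ → ℝ) : Prop :=
  (∀ t ∈ Set.Ico (0:ℝ) T, Filter.Tendsto x (nhdsWithin t (Set.Ici t)) (nhds (x t))) ∧
  (∀ t ∈ Set.Ioc (0:ℝ) T, ∃ L : ℝ, Filter.Tendsto x (nhdsWithin t (Set.Iio t)) (nhds L))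

/-- `(u, r)` is a parametric representation of the càdlàg function `x` on `[0, T]`. -/
def IsParamRep (T : ℝ) (x u r : ℝ → ℝ) : Prop :=
  ContinuousOn u (Set.Icc 0 1) ∧ ContinuousOn r (Set.Icc 0 1) ∧
  MonotoneOn r (Set.Icc 0 1) ∧ r 0 = 0 ∧ r 1 = T ∧
  (∀ s ∈ Set.Icc (0:ℝ) 1, u s ∈ segment ℝ (leftL x (r s)) (x (r s))) ∧
  (∀ t ∈ Set.Icc (0:ℝ) T, ∀ v ∈ segment ℝ (leftL x t) (x t),
    ∃ s ∈ Set.Icc (0:ℝ) 1, r s = t ∧ u s = v) ∧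
  (∀ s₁ ∈ Set.Icc (0:ℝ) 1, ∀ s₂ ∈ Set.Icc (0:ℝ) 1, s₁ ≤ s₂ → r s₁ = r s₂ →
    0 ≤ (u s₂ - u s₁) * (x (r s₁) - leftL x (r s₁)))

/-- Uniform norm over `[0, 1]`. -/
noncomputable def unif (f : ℝ → ℝ) : ℝ := ⨆ s : Set.Icc (0:ℝ) 1, |f s.1|

/-- Uniform norm over `[0, T]`. -/
noncomputable def supT (T : ℝ) (f : ℝ → ℝ) : ℝ := ⨆ t : Set.Icc (0:ℝ) T, |f t.1|

/-- The maximum-jump functional `J_max(x)` over `[0, T]`. -/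
noncomputable def Jmax (T : ℝ) (x : ℝ → ℝ) : ℝ :=
  ⨆ t : Set.Icc (0:ℝ) T, |x t.1 - leftL x t.1|

/-- The Skorohod `M₁` metric on `D([0, T], ℝ)`. -/
noncomputable def dM1 (T : ℝ) (x y : ℝ → ℝ) : ℝ :=
  sInf {d : ℝ | ∃ ux rx uy ry : ℝ → ℝ, IsParamRep T x ux rx ∧ IsParamRep T y uy ry ∧
    d = max (unif fun s => ux s - uy s) (unif fun s => rx s - ry s)}

/-- The `L₁` norm over `[0, 1]`. -/
noncomputable def L1norm (g : ℝ → ℝ) : ℝ := ∫ s in (0:ℝ)..1, |g s|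

/-- `r` is absolutely continuous on `[0,1]` with (integrable) derivative `r'`. -/
def AbsContOn01 (r r' : ℝ → ℝ) : Prop :=
  IntervalIntegrable r' MeasureTheory.volume 0 1 ∧
  ∀ s ∈ Set.Icc (0:ℝ) 1, r s = r 0 + ∫ w in (0:ℝ)..s, r' w

/-- `y` is bounded and Borel measurable on `[0, T]`. -/
def BddMeasOn (T : ℝ) (y : ℝ → ℝ) : Prop :=
  (∃ M : ℝ, ∀ t ∈ Set.Icc (0:ℝ) T, |y t| ≤ M) ∧
  Measurable fun t : Set.Icc (0:ℝ) T => y t.1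

/-- The `M₁` oscillation function `w_s(x, δ)` on `[0, T]`. -/
noncomputable def wOsc (T : ℝ) (x : ℝ → ℝ) (δ : ℝ) : ℝ :=
  sSup {v : ℝ | ∃ t ∈ Set.Icc (0:ℝ) T, ∃ t₁ t₂ t₃ : ℝ,
    max 0 (t - δ) ≤ t₁ ∧ t₁ < t₂ ∧ t₂ < t₃ ∧ t₃ ≤ min (t + δ) T ∧
    v = Metric.infDist (x t₂) (segment ℝ (x t₁) (x t₃))}

/-- The ordinary oscillation modulus `ν(x, δ)` on `[0, T]`. -/
noncomputable def nuOsc (T : ℝ) (x : ℝ → ℝ) (δ : ℝ) : ℝ :=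
  sSup {v : ℝ | ∃ t ∈ Set.Icc (0:ℝ) (T - δ), ∃ t₁ ∈ Set.Icc t (t + δ),
    ∃ t₂ ∈ Set.Icc t (t + δ), v = |x t₁ - x t₂|}

/-- Reparametrization: solve `q (l s) + δ * l s = g s`. -/
lemma exists_reparam (T δ K : ℝ) (hδ : 0 < δ) (q g : ℝ → ℝ)
    (hqc : ContinuousOn q (Icc 0 1)) (hqm : MonotoneOn q (Icc 0 1)) (hq0 : q 0 = 0) (hq1 : q 1 = T)
    (hgm : MonotoneOn g (Icc 0 1))
    (hgK : ∀ a ∈ Icc (0:ℝ) 1, ∀ b ∈ Icc (0:ℝ) 1, a ≤ b → g b - g a ≤ K * (b - a))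
    (hg0 : g 0 = 0) (hg1 : g 1 = T + δ) :
    ∃ l : ℝ → ℝ, (∀ s ∈ Icc (0:ℝ) 1, l s ∈ Icc (0:ℝ) 1 ∧ q (l s) + δ * l s = g s) ∧
      l 0 = 0 ∧ l 1 = 1 ∧ MonotoneOn l (Icc 0 1) ∧ ContinuousOn l (Icc 0 1) ∧
      (∀ a ∈ Icc (0:ℝ) 1, ∀ b ∈ Icc (0:ℝ) 1, a ≤ b → δ * (l b - l a) ≤ K * (b - a)) := by
  have h0m : (0:ℝ) ∈ Icc (0:ℝ) 1 := by simp
  have h1m : (1:ℝ) ∈ Icc (0:ℝ) 1 := by simp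
  have hfc : ContinuousOn (fun s => q s + δ * s) (Icc 0 1) := by fun_prop
  have hfs : ∀ a ∈ Icc (0:ℝ) 1, ∀ b ∈ Icc (0:ℝ) 1, a < b → q a + δ * a < q b + δ * b := by
    intro a ha b hb hab
    have := hqm ha hb hab.le
    have := mul_lt_mul_of_pos_left hab hδ
    linarith
  have hfle : ∀ a ∈ Icc (0:ℝ) 1, ∀ b ∈ Icc (0:ℝ) 1, q a + δ * a ≤ q b + δ * b → a ≤ b := by
    intro a ha b hb hab
    by_contra! h
    exact absurd (hfs b hb a ha h) (not_lt.2 hab)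
  have hex : ∀ s : ℝ, ∃ y, s ∈ Icc (0:ℝ) 1 → (y ∈ Icc (0:ℝ) 1 ∧ q y + δ * y = g s) := by
    intro s
    by_cases hs : s ∈ Icc (0:ℝ) 1
    · have := intermediate_value_Icc (zero_le_one' ℝ) hfc
      have hm : g s ∈ Icc (q 0 + δ * 0) (q 1 + δ * 1) := by
        constructor
        · have := hgm h0m hs hs.1
          rw [hq0]; linarith
        · have := hgm hs h1m hs.2
          rw [hq1]; linarith
      obtain ⟨y, hy, hy2⟩ := this hm
      exact ⟨y, fun _ => ⟨hy, hy2⟩⟩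
    · exact ⟨0, fun h => absurd h hs⟩
  choose l hl using hex
  have hmono : MonotoneOn l (Icc 0 1) := by
    intro a ha b hb hab
    apply hfle _ (hl a ha).1 _ (hl b hb).1
    rw [(hl a ha).2, (hl b hb).2]
    exact hgm ha hb hab
  have hlip : ∀ a ∈ Icc (0:ℝ) 1, ∀ b ∈ Icc (0:ℝ) 1, a ≤ b → δ * (l b - l a) ≤ K * (b - a) := by
    intro a ha b hb hab
    have h1 := hqm (hl a ha).1 (hl b hb).1 (hmono ha hb hab)
    have h2 := (hl a ha).2
    have h3 := (hl b hb).2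
    have h4 := hgK a ha b hb hab
    linarith
  refine ⟨l, hl, ?_, ?_, hmono, ?_, hlip⟩
  · apply le_antisymm _ (hl 0 h0m).1.1
    apply hfle _ (hl 0 h0m).1 _ h0m
    rw [(hl 0 h0m).2, hg0, hq0]; simp
  · apply le_antisymm (hl 1 h1m).1.2
    apply hfle _ h1m _ (hl 1 h1m).1
    rw [(hl 1 h1m).2, hg1, hq1]; simp
  · have hK : 0 ≤ K / δ := by
      have h1 := hlip 0 h0m 1 h1m zero_le_one
      have h2 := hmono h0m h1m zero_le_one
      have : 0 ≤ δ * (l 1 - l 0) := mul_nonneg hδ.le (by linarith)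
      exact div_nonneg (by linarith) hδ.le
    have : LipschitzOnWith (K / δ).toNNReal l (Icc 0 1) := by
      apply LipschitzOnWith.of_le_add_mul
      intro a ha b hb
      rw [Real.coe_toNNReal _ hK]
      rcases le_total a b with h | h
      · have := hmono ha hb h
        have : 0 ≤ K / δ * dist a b := mul_nonneg hK dist_nonneg
        linarith
      · have h1 := hlip b hb a ha h
        rw [Real.dist_eq, abs_of_nonneg (by linarith)]
        have : l a - l b ≤ K / δ * (a - b) := by
          rw [div_mul_eq_mul_div, le_div_iff₀ hδ]; linarith
        linarith
    exact this.continuousOn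

/-- Parametric representations are stable under reparametrization. -/
lemma IsParamRep.reparam {T : ℝ} {x u r l : ℝ → ℝ} (h : IsParamRep T x u r)
    (hl : ∀ s ∈ Icc (0:ℝ) 1, l s ∈ Icc (0:ℝ) 1) (h0 : l 0 = 0) (h1 : l 1 = 1)
    (hm : MonotoneOn l (Icc 0 1)) (hc : ContinuousOn l (Icc 0 1)) :
    IsParamRep T x (fun s => u (l s)) (fun s => r (l s)) := by
  obtain ⟨a1, a2, a3, a4, a5, a6, a7, a8⟩ := h
  refine ⟨a1.comp hc hl, a2.comp hc hl, fun a ha b hb hab => a3 (hl a ha) (hl b hb) (hm ha hb hab),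
    by simp [h0, a4], by simp [h1, a5], fun s hs => a6 _ (hl s hs), ?_, ?_⟩
  · intro t ht v hv
    obtain ⟨s, hs, hs1, hs2⟩ := a7 t ht v hv
    have hi := intermediate_value_Icc (zero_le_one' ℝ) hc
    rw [h0, h1] at hi
    obtain ⟨y, hy, hy2⟩ := hi hs
    exact ⟨y, hy, by simp [hy2, hs1], by simp [hy2, hs2]⟩
  · intro s₁ hs₁ s₂ hs₂ h12 hr
    exact a8 _ (hl _ hs₁) _ (hl _ hs₂) (hm hs₁ hs₂ h12) hr

/-- Monotone Lipschitz functions have bounded nonnegative a.e. derivatives. -/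
lemma exists_deriv (K : ℝ) (f : ℝ → ℝ) (hm : MonotoneOn f (Icc 0 1))
    (hlip : ∀ a ∈ Icc (0:ℝ) 1, ∀ b ∈ Icc (0:ℝ) 1, a ≤ b → f b - f a ≤ K * (b - a)) :
    ∃ f' : ℝ → ℝ, AbsContOn01 f f' ∧ ∀ s, 0 ≤ f' s ∧ f' s ≤ K := by
  have h0m : (0:ℝ) ∈ Icc (0:ℝ) 1 := by simp
  have h1m : (1:ℝ) ∈ Icc (0:ℝ) 1 := by simp
  have hK : 0 ≤ K := by
    have h1 := hlip 0 h0m 1 h1m zero_le_one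
    have h2 := hm h0m h1m zero_le_one
    linarith
  have hp : ∀ s : ℝ, max 0 (min s 1) ∈ Icc (0:ℝ) 1 := fun s => ⟨le_max_left _ _, by simp⟩
  let F : ℝ → ℝ := fun s => f (max 0 (min s 1))
  have hFf : ∀ s ∈ Icc (0:ℝ) 1, F s = f s := by
    intro s hs
    simp [F, min_eq_left hs.2, max_eq_right hs.1]
  have hpm : ∀ a b : ℝ, a ≤ b → max 0 (min a 1) ≤ max 0 (min b 1) := by
    intro a b hab; gcongr
  have hpl : ∀ a b : ℝ, a ≤ b → max 0 (min b 1) - max 0 (min a 1) ≤ b - a := by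
    intro a b hab
    rcases max_cases 0 (min b 1) with h | h <;> rcases max_cases 0 (min a 1) with h' | h' <;>
      rcases min_cases a 1 with h2 | h2 <;> rcases min_cases b 1 with h3 | h3 <;> linarith
  have hFm : Monotone F := fun a b hab => hm (hp a) (hp b) (hpm a b hab)
  have hFL : LipschitzWith K.toNNReal F := by
    apply LipschitzWith.of_le_add_mul
    intro a b
    rw [Real.coe_toNNReal _ hK]
    rcases le_total a b with h | h
    · have := hFm h
      have : 0 ≤ K * dist a b := mul_nonneg hK dist_nonneg
      linarith
    · have h1 := hlip _ (hp b) _ (hp a) (hpm b a h)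
      have h2 := mul_le_mul_of_nonneg_left (hpl b a h) hK
      rw [Real.dist_eq, abs_of_nonneg (by linarith)]
      simp only [F]
      linarith
  have hac : ∀ s, AbsolutelyContinuousOnInterval F 0 s := fun s =>
    (hFL.lipschitzOnWith (s := uIcc 0 s)).absolutelyContinuousOnInterval
  refine ⟨deriv F, ⟨(hac 1).intervalIntegrable_deriv, ?_⟩, ?_⟩
  · intro s hs
    rw [(hac s).integral_deriv_eq_sub, hFf s hs, hFf 0 h0m]; ring
  · intro s
    refine ⟨hFm.deriv_nonneg, ?_⟩
    have := norm_deriv_le_of_lipschitz (x₀ := s) hFL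
    rw [Real.coe_toNNReal _ hK] at this
    exact (le_abs_self _).trans this

lemma unif_nonneg (f : ℝ → ℝ) : 0 ≤ unif f := Real.iSup_nonneg fun _ => abs_nonneg _

lemma unif_le {f : ℝ → ℝ} {C : ℝ} (h : ∀ s ∈ Icc (0:ℝ) 1, |f s| ≤ C) : unif f ≤ C := by
  have : Nonempty (Icc (0:ℝ) 1) := ⟨⟨0, by simp⟩⟩
  exact ciSup_le fun s => h s.1 s.2

lemma le_unif {f : ℝ → ℝ} (hf : ContinuousOn f (Icc 0 1)) {s : ℝ} (hs : s ∈ Icc (0:ℝ) 1) :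
    |f s| ≤ unif f := by
  obtain ⟨C, hC⟩ := isCompact_Icc.exists_bound_of_continuousOn hf
  refine le_ciSup (f := fun s : Icc (0:ℝ) 1 => |f s.1|) ⟨C, ?_⟩ ⟨s, hs⟩
  rintro _ ⟨y, rfl⟩
  exact hC y.1 y.2

/-- Theorem 1.2: time functions in the parametric representations can be chosen
absolutely continuous with uniformly bounded derivatives converging in `L₁`. -/
theorem time_functions_in_parametric_representations
    (T : ℝ) (hT : 0 < T)
    (x : ℕ → ℝ → ℝ) (x₀ : ℝ → ℝ)
    (hxc : ∀ n, IsCadlagOn T (x n)) (hx₀c : IsCadlagOn T x₀)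
    (u0 r0 : ℝ → ℝ) (un rn : ℕ → ℝ → ℝ)
    (h0 : IsParamRep T x₀ u0 r0) (hn : ∀ n, IsParamRep T (x n) (un n) (rn n))
    (hconv : Filter.Tendsto
      (fun n => max (unif fun s => un n s - u0 s) (unif fun s => rn n s - r0 s))
      Filter.atTop (nhds 0)) :
    ∃ (u r : ℝ → ℝ) (uu rr : ℕ → ℝ → ℝ) (r' : ℝ → ℝ) (rr' : ℕ → ℝ → ℝ),
      IsParamRep T x₀ u r ∧ (∀ n, IsParamRep T (x n) (uu n) (rr n)) ∧
      Filter.Tendsto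
        (fun n => max (unif fun s => uu n s - u s) (unif fun s => rr n s - r s))
        Filter.atTop (nhds 0) ∧
      AbsContOn01 r r' ∧ (∀ n, AbsContOn01 (rr n) (rr' n)) ∧
      Filter.Tendsto (fun n => L1norm fun s => rr' n s - r' s) Filter.atTop (nhds 0) ∧
      (∃ C : ℝ, ∀ᵐ s ∂(MeasureTheory.volume.restrict (Set.Icc (0:ℝ) 1)), |r' s| ≤ C) ∧
      (∃ C : ℝ, ∀ n, ∀ᵐ s ∂(MeasureTheory.volume.restrict (Set.Icc (0:ℝ) 1)),
        |rr' n s| ≤ C) := by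
  have h0m : (0:ℝ) ∈ Icc (0:ℝ) 1 := by simp
  have h1m : (1:ℝ) ∈ Icc (0:ℝ) 1 := by simp
  -- the error sequence
  obtain ⟨ε, hε⟩ : ∃ ε : ℕ → ℝ, ε =
    fun n => max (unif fun s => un n s - u0 s) (unif fun s => rn n s - r0 s) := ⟨_, rfl⟩
  rw [← hε] at hconv
  have hε0 : ∀ n, 0 ≤ ε n := fun n => by rw [hε]; exact (unif_nonneg _).trans (le_max_left _ _)
  have hεu : ∀ n, ∀ s ∈ Icc (0:ℝ) 1, |un n s - u0 s| ≤ ε n := fun n s hs => by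
    rw [hε]
    exact (le_unif (f := fun s => un n s - u0 s) ((hn n).1.sub h0.1) hs).trans (le_max_left _ _)
  have hεr : ∀ n, ∀ s ∈ Icc (0:ℝ) 1, |rn n s - r0 s| ≤ ε n := fun n s hs => by
    rw [hε]
    exact (le_unif (f := fun s => rn n s - r0 s) ((hn n).2.1.sub h0.2.1) hs).trans
      (le_max_right _ _)
  -- Step 1: make the limiting time function Lipschitz
  obtain ⟨k, hk, hk0, hk1, hkm, hkc, hklip⟩ := exists_reparam T 1 (T + 1) one_pos r0
    (fun s => (T + 1) * s) h0.2.1 h0.2.2.1 h0.2.2.2.1 h0.2.2.2.2.1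
    (fun a _ b _ hab => by dsimp only; gcongr) (fun a _ b _ _ => by ring_nf; rfl)
    (by simp) (by simp)
  have hu := h0.reparam (fun s hs => (hk s hs).1) hk0 hk1 hkm hkc
  have hun := fun n => (hn n).reparam (fun s hs => (hk s hs).1) hk0 hk1 hkm hkc
  obtain ⟨u, hudef⟩ : ∃ u : ℝ → ℝ, u = fun s => u0 (k s) := ⟨_, rfl⟩
  obtain ⟨r, hrdef⟩ : ∃ r : ℝ → ℝ, r = fun s => r0 (k s) := ⟨_, rfl⟩
  obtain ⟨v, hvdef⟩ : ∃ v : ℕ → ℝ → ℝ, v = fun n s => un n (k s) := ⟨_, rfl⟩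
  obtain ⟨q, hqdef⟩ : ∃ q : ℕ → ℝ → ℝ, q = fun n s => rn n (k s) := ⟨_, rfl⟩
  have hU : IsParamRep T x₀ u r := by rw [hudef, hrdef]; exact hu
  have hV : ∀ n, IsParamRep T (x n) (v n) (q n) := by rw [hvdef, hqdef]; exact hun
  have hεv : ∀ n, ∀ s ∈ Icc (0:ℝ) 1, |v n s - u s| ≤ ε n := fun n s hs => by
    rw [hvdef, hudef]; exact hεu n _ (hk s hs).1
  have hεq : ∀ n, ∀ s ∈ Icc (0:ℝ) 1, |q n s - r s| ≤ ε n := fun n s hs => by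
    rw [hqdef, hrdef]; exact hεr n _ (hk s hs).1
  have hrm := hU.2.2.1
  have hrlip : ∀ a ∈ Icc (0:ℝ) 1, ∀ b ∈ Icc (0:ℝ) 1, a ≤ b → r b - r a ≤ (T + 1) * (b - a) := by
    intro a ha b hb hab
    have h1 := (hk a ha).2
    have h2 := (hk b hb).2
    have h3 := hkm ha hb hab
    rw [hrdef]
    dsimp only
    linarith
  clear hu hun hεu hεr hudef hrdef hvdef hqdef
  -- the regularization sequence
  obtain ⟨δ, hδdef⟩ : ∃ δ : ℕ → ℝ, δ = fun n => √(ε n + 1 / ((n:ℝ) + 1)) := ⟨_, rfl⟩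
  have hδpos : ∀ n, 0 < δ n := fun n => by
    rw [hδdef]
    have := hε0 n
    positivity
  have hδsq : ∀ n, ε n ≤ δ n * δ n := fun n => by
    rw [hδdef]
    have := hε0 n
    have h2 : 0 ≤ 1 / ((n:ℝ) + 1) := by positivity
    dsimp only
    rw [Real.mul_self_sqrt (by positivity)]
    linarith
  have hδ0 : Tendsto δ atTop (𝓝 0) := by
    rw [hδdef]
    have := (hconv.add tendsto_one_div_add_atTop_nhds_zero_nat).sqrt
    simpa using this
  -- Step 2
  have hstep := fun n => exists_reparam T (δ n) (T + 1 + δ n) (hδpos n) (q n)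
    (fun s => r s + δ n * s) (hV n).2.1 (hV n).2.2.1 (hV n).2.2.2.1 (hV n).2.2.2.2.1
    (fun a ha b hb hab => by
      have := hrm ha hb hab
      have := mul_le_mul_of_nonneg_left hab (hδpos n).le
      dsimp only
      linarith)
    (fun a ha b hb hab => by
      have := hrlip a ha b hb hab
      linarith)
    (by simp [hU.2.2.2.1]) (by simp [hU.2.2.2.2.1])
  choose l hl hl0 hl1 hlm hlc hllip using hstep
  have hld : ∀ n, ∀ s ∈ Icc (0:ℝ) 1, |l n s - s| ≤ δ n := by
    intro n s hs
    obtain ⟨h1, h2⟩ := hl n s hs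
    have h3 := abs_le.1 (hεq n _ h1)
    have h4 := hδsq n
    have h5 := hδpos n
    rw [abs_le]
    constructor
    · rcases le_total s (l n s) with h | h
      · linarith
      · have h6 := hrm h1 hs h
        have : δ n * (s - l n s) ≤ δ n * δ n := by linarith
        have := le_of_mul_le_mul_left this h5
        linarith
    · rcases le_total s (l n s) with h | h
      · have h6 := hrm hs h1 h
        have : δ n * (l n s - s) ≤ δ n * δ n := by linarith
        exact le_of_mul_le_mul_left this h5
      · linarith
  obtain ⟨r', ⟨hr'i, hr'e⟩, hr'b⟩ := exists_deriv (T + 1) r hrm hrlip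
  have hstep2 := fun n => exists_deriv ((T + 1 + δ n) / δ n) (l n) (hlm n) (fun a ha b hb hab => by
    rw [div_mul_eq_mul_div, le_div_iff₀ (hδpos n)]
    have := hllip n a ha b hb hab
    linarith)
  choose l' hl' hl'b using hstep2
  have hl'b2 : ∀ n s, δ n * l' n s ≤ T + 1 + δ n := fun n s => by
    have := (hl'b n s).2
    rw [le_div_iff₀ (hδpos n)] at this
    linarith
  have hint : ∀ n, ∀ s ∈ Icc (0:ℝ) 1, IntervalIntegrable (fun w => δ n - δ n * l' n w) volume 0 s ∧
      IntervalIntegrable r' volume 0 s ∧ IntervalIntegrable (l' n) volume 0 s := by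
    intro n s hs
    have hsub : uIcc 0 s ⊆ uIcc (0:ℝ) 1 := by
      rw [uIcc_of_le hs.1, uIcc_of_le zero_le_one]
      exact Icc_subset_Icc_right hs.2
    have h1 := (hl' n).1.mono_set hsub
    exact ⟨intervalIntegrable_const.sub (h1.const_mul _), hr'i.mono_set hsub, h1⟩
  have hl'int : ∀ n, ∫ w in (0:ℝ)..1, l' n w = 1 := fun n => by
    have := (hl' n).2 1 h1m
    rw [hl0, hl1] at this
    linarith
  refine ⟨u, r, fun n s => v n (l n s), fun n s => q n (l n s), r',
    fun n s => r' s + (δ n - δ n * l' n s), hU,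
    fun n => (hV n).reparam (fun s hs => (hl n s hs).1) (hl0 n) (hl1 n) (hlm n) (hlc n),
    ?_, ⟨hr'i, hr'e⟩, ?_, ?_, ?_, ?_⟩
  · rw [Metric.tendsto_atTop]
    intro η hη
    have huc := isCompact_Icc.uniformContinuousOn_of_continuous hU.1
    rw [Metric.uniformContinuousOn_iff] at huc
    obtain ⟨κ, hκ, huκ⟩ := huc (η / 4) (by positivity)
    have e1 := hδ0.eventually_lt_const hκ
    have e2 := hδ0.eventually_lt_const (show (0:ℝ) < η / 4 by positivity)
    have e3 := hconv.eventually_lt_const (show (0:ℝ) < η / 4 by positivity)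
    obtain ⟨N, hN⟩ := eventually_atTop.1 (e1.and (e2.and e3))
    refine ⟨N, fun n hnN => ?_⟩
    obtain ⟨b1, b2, b3⟩ := hN n hnN
    have hle : max (unif fun s => v n (l n s) - u s) (unif fun s => q n (l n s) - r s) ≤ η / 2 := by
      apply max_le
      · apply unif_le
        intro s hs
        have c1 := hεv n _ (hl n s hs).1
        have c2 := huκ _ (hl n s hs).1 s hs (by
          rw [Real.dist_eq]; exact (hld n s hs).trans_lt b1)
        rw [Real.dist_eq] at c2
        have c3 := abs_add_le (v n (l n s) - u (l n s)) (u (l n s) - u s)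
        rw [sub_add_sub_cancel] at c3
        linarith
      · apply unif_le
        intro s hs
        have c1 := (hl n s hs).2
        have c2 : q n (l n s) - r s = δ n * (s - l n s) := by linarith
        have c3 : |s - l n s| ≤ 1 := by
          have d1 := (hl n s hs).1
          rw [abs_le]
          constructor <;> linarith [d1.1, d1.2, hs.1, hs.2]
        rw [c2, abs_mul, abs_of_pos (hδpos n)]
        have := mul_le_mul_of_nonneg_left c3 (hδpos n).le
        linarith
    rw [Real.dist_eq, sub_zero, abs_of_nonneg ((unif_nonneg _).trans (le_max_left _ _))]
    linarith
  · intro n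
    refine ⟨(hint n 1 h1m).2.1.add (hint n 1 h1m).1, ?_⟩
    intro s hs
    obtain ⟨i1, i2, i3⟩ := hint n s hs
    rw [intervalIntegral.integral_add i2 i1,
      intervalIntegral.integral_sub intervalIntegrable_const (i3.const_mul _),
      intervalIntegral.integral_const_mul, intervalIntegral.integral_const]
    have c1 := (hl n s hs).2
    have c2 := hr'e s hs
    have c3 := (hl' n).2 s hs
    have c4 := (hl n 0 h0m).2
    simp only [hl0] at c3 c4 ⊢
    simp only [smul_eq_mul]
    have c5 : δ n * l n s = δ n * ∫ w in (0:ℝ)..s, l' n w := by rw [c3]; ring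
    linarith
  · refine squeeze_zero (fun n => ?_) (fun n => ?_) (show Tendsto (fun n => 2 * δ n) atTop (𝓝 0) by
      simpa using hδ0.const_mul 2)
    · exact intervalIntegral.integral_nonneg zero_le_one fun _ _ => abs_nonneg _
    · obtain ⟨i1, i2, i3⟩ := hint n 1 h1m
      have e : (2 * δ n) = ∫ w in (0:ℝ)..1, (δ n + δ n * l' n w) := by
        rw [intervalIntegral.integral_add intervalIntegrable_const (i3.const_mul _),
          intervalIntegral.integral_const_mul, intervalIntegral.integral_const, hl'int]
        simp only [smul_eq_mul]; ring
      rw [e]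
      unfold L1norm
      simp only [add_sub_cancel_left]
      apply intervalIntegral.integral_mono_on zero_le_one i1.abs
        (intervalIntegrable_const.add (i3.const_mul _))
      intro w _
      have := mul_nonneg (hδpos n).le (hl'b n w).1
      rw [abs_le]
      constructor <;> linarith [hδpos n]
  · exact ⟨T + 1, ae_of_all _ fun s => abs_le.2 ⟨by linarith [(hr'b s).1], (hr'b s).2⟩⟩
  · obtain ⟨B, hB⟩ := hδ0.bddAbove_range
    refine ⟨T + 1 + B, fun n => ae_of_all _ fun s => ?_⟩
    have d1 : δ n ≤ B := hB ⟨n, rfl⟩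
    have d2 := hl'b2 n s
    have d3 := mul_nonneg (hδpos n).le (hl'b n s).1
    have d4 := hr'b s
    rw [abs_le]
    constructor <;> linarith [d4.1, d4.2, hδpos n]
end

section
/- Let T > 0 and let x be any càdlàg function on [0,T]. Then there exists a parametric representation (u, r) ∈ Π(x) such that r is absolutely continuous with respect to Lebesgue measure on [0,1], with derivative r′ satisfying 0 ≤ r′(s) ≤ 2T for almost every s ∈ [0,1]. (Lemma 4.3, choice of r in the parametric representation of x.) -/
open Set Filter MeasureTheory Topology

lemma leftL_zero_aux (x : ℝ → ℝ) : leftL x 0 = x 0 := by simp [leftL]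

lemma tendsto_leftL_aux {T : ℝ} {x : ℝ → ℝ} (hx : IsCadlagOn T x) {t : ℝ} (ht : t ∈ Set.Ioc 0 T) :
    Tendsto x (𝓝[<] t) (𝓝 (leftL x t)) := by
  have h : leftL x t = Function.leftLim x t := by simp [leftL, ht.1.ne']
  rw [h]
  exact tendsto_leftLim_of_tendsto (hx.2 t ht)

lemma jump_countable_aux {T : ℝ} {x : ℝ → ℝ} (hx : IsCadlagOn T x) :
    {t | t ∈ Set.Ioc 0 T ∧ leftL x t ≠ x t}.Countable := by
  have key : {t | t ∈ Set.Ioc 0 T ∧ leftL x t ≠ x t} ⊆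
      ⋃ (a : ℚ) (p : ℚ), ({t | (a:ℝ) < t ∧ (∀ s, (a:ℝ) < s → s < t → x s < p) ∧ (p:ℝ) < x t} ∪
        {t | (a:ℝ) < t ∧ (∀ s, (a:ℝ) < s → s < t → (p:ℝ) < x s) ∧ x t < p}) := by
    rintro t ⟨ht, hne⟩
    have hl := tendsto_leftL_aux hx ht
    simp only [mem_iUnion]
    rcases lt_or_gt_of_ne hne with h | h
    · obtain ⟨p, hp1, hp2⟩ := exists_rat_btwn h
      obtain ⟨b, hb, hb2⟩ := (mem_nhdsLT_iff_exists_Ioo_subset).1 (hl.eventually_lt_const hp1)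
      obtain ⟨a, ha1, ha2⟩ := exists_rat_btwn (mem_Iio.1 hb)
      exact ⟨a, p, Or.inl ⟨ha2, fun s hs hst => hb2 ⟨ha1.trans hs, hst⟩, hp2⟩⟩
    · obtain ⟨p, hp1, hp2⟩ := exists_rat_btwn h
      obtain ⟨b, hb, hb2⟩ := (mem_nhdsLT_iff_exists_Ioo_subset).1 (hl.eventually_const_lt hp2)
      obtain ⟨a, ha1, ha2⟩ := exists_rat_btwn (mem_Iio.1 hb)
      exact ⟨a, p, Or.inr ⟨ha2, fun s hs hst => hb2 ⟨ha1.trans hs, hst⟩, hp1⟩⟩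
  refine Set.Countable.mono key ?_
  refine countable_iUnion fun a => countable_iUnion fun p => Set.Countable.union ?_ ?_
  · apply Set.Subsingleton.countable
    rintro t ⟨h1, h2, h3⟩ t' ⟨h1', h2', h3'⟩
    rcases lt_trichotomy t t' with h | h | h
    · exact absurd (h2' t h1 h) h3.not_gt
    · exact h
    · exact absurd (h2 t' h1' h) h3'.not_gt
  · apply Set.Subsingleton.countable
    rintro t ⟨h1, h2, h3⟩ t' ⟨h1', h2', h3'⟩
    rcases lt_trichotomy t t' with h | h | h
    · exact absurd (h2' t h1 h) h3.not_gt
    · exact h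
    · exact absurd (h2 t' h1' h) h3'.not_gt

lemma exists_jump_fun_aux {T : ℝ} (D : Set ℝ) (hD : D.Countable)
    (hDT : D ⊆ Set.Ioc 0 T) :
    ∃ (f : ℝ → ℝ) (C : ℝ), Monotone f ∧ (∀ t ≤ 0, f t = 0) ∧ (∀ t ≥ T, f t = C) ∧ C ≤ 1/2 ∧
      ∀ d ∈ D, Function.leftLim f d < Function.rightLim f d := by
  classical
  obtain ⟨w, hw, C, hC, hC2⟩ := hD.exists_pos_hasSum_le (show (0:ℝ) < 1/2 by norm_num)
  have hsum : ∀ t : ℝ, Summable (fun i : D => if (i:ℝ) ≤ t then w i else 0) := fun t =>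
    Summable.of_nonneg_of_le (fun i => by split_ifs <;> simp [(hw _).le])
      (fun i => by split_ifs <;> simp [(hw _).le]) hC.summable
  have hmono : Monotone (fun t : ℝ => ∑' i : D, if (i:ℝ) ≤ t then w i else 0) := by
    intro s t hst
    refine (hsum s).tsum_le_tsum (fun i => ?_) (hsum t)
    have := (hw i).le
    split_ifs <;> first | rfl | linarith
  refine ⟨fun t => ∑' i : D, if (i:ℝ) ≤ t then w i else 0, C, hmono, ?_, ?_, hC2, ?_⟩
  · intro t ht
    have : (fun i : D => if (i:ℝ) ≤ t then w i else 0) = fun _ => 0 := by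
      funext i
      rw [if_neg]
      exact not_le.2 (lt_of_le_of_lt ht (hDT i.2).1)
    simp only [this, tsum_zero]
  · intro t ht
    have : (fun i : D => if (i:ℝ) ≤ t then w i else 0) = fun i : D => w i := by
      funext i
      rw [if_pos]
      exact (hDT i.2).2.trans ht
    simp only [this]
    exact hC.tsum_eq
  · intro d hd
    refine lt_of_lt_of_le ?_ (hmono.le_rightLim le_rfl)
    have h1 : ∀ t < d, (∑' i : D, if (i:ℝ) ≤ t then w i else 0) ≤
        (∑' i : D, if (i:ℝ) ≤ d then w i else 0) - w d := by
      intro t ht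
      have h2 : HasSum (fun i : D => if i = ⟨d, hd⟩ then w d else 0) (w d) := hasSum_ite_eq _ _
      have := (hsum t).tsum_le_tsum (g := fun i : D => (if (i:ℝ) ≤ d then w i else 0) -
        if i = ⟨d, hd⟩ then w d else 0) ?_ ((hsum d).sub h2.summable)
      · rwa [(hsum d).tsum_sub h2.summable, h2.tsum_eq] at this
      · intro i
        have := (hw i).le
        by_cases hi : i = ⟨d, hd⟩
        · subst hi
          simp [not_le.2 ht]
        · simp only [hi, if_false, sub_zero]
          split_ifs <;> first | rfl | linarith
    have h3 := le_of_tendsto (hmono.tendsto_leftLim d)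
      (eventually_nhdsWithin_of_forall h1)
    have := hw d
    linarith

/-- The inverse of `t ↦ c t + f t`. -/
lemma exists_inv_aux (f : ℝ → ℝ) (hf : Monotone f) (C : ℝ) (hC0 : ∀ t, 0 ≤ f t) (hC : ∀ t, f t ≤ C)
    (c : ℝ) (hc : 0 < c) (s : ℝ) :
    ∃ t, c * t + Function.leftLim f t ≤ s ∧ s ≤ c * t + Function.rightLim f t := by
  set S := {t | c * t + f t ≤ s} with hS
  have hne : S.Nonempty := by
    refine ⟨(s - C) / c, ?_⟩
    have := hC ((s - C) / c)
    simp only [hS, mem_ofPred_eq]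
    rw [mul_div_cancel₀ _ hc.ne']
    linarith
  have hbd : BddAbove S := by
    refine ⟨s / c, fun t ht => ?_⟩
    rw [le_div_iff₀ hc]
    have := hC0 t
    simp only [hS, mem_ofPred_eq] at ht
    linarith
  have hm : StrictMono fun t => c * t + f t := fun a b hab =>
    add_lt_add_of_lt_of_le (mul_lt_mul_of_pos_left hab hc) (hf hab.le)
  have hcont : ∀ t : ℝ, ∀ S, Tendsto (fun t => c * t) (𝓝[S] t) (𝓝 (c * t)) := fun t S =>
    ((continuous_const.mul continuous_id).tendsto t).mono_left nhdsWithin_le_nhds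
  refine ⟨sSup S, ?_, ?_⟩
  · refine le_of_tendsto ((hcont _ _).add (hf.tendsto_leftLim _))
      (eventually_nhdsWithin_of_forall fun t ht => ?_)
    obtain ⟨t', ht', h⟩ := exists_lt_of_lt_csSup hne ht
    exact (hm h).le.trans ht'
  · refine ge_of_tendsto ((hcont _ _).add (hf.tendsto_rightLim _))
      (eventually_nhdsWithin_of_forall fun t ht => ?_)
    by_contra h
    exact absurd (le_csSup hbd (not_le.1 h).le) (not_le.2 ht)

lemma left_close_aux {T : ℝ} {x : ℝ → ℝ} (hx : IsCadlagOn T x) {t₀ : ℝ} (ht : t₀ ∈ Set.Ioc 0 T)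
    {ε : ℝ} (hε : 0 < ε) : ∃ b < t₀, ∀ t, b < t → t < t₀ →
      x t ∈ Metric.closedBall (leftL x t₀) ε ∧ leftL x t ∈ Metric.closedBall (leftL x t₀) ε := by
  have hl := tendsto_leftL_aux hx ht
  obtain ⟨b, hb, hb2⟩ := (mem_nhdsLT_iff_exists_Ioo_subset).1
    (hl.eventually (Metric.closedBall_mem_nhds _ hε))
  refine ⟨max b 0, max_lt hb ht.1, fun t h1 h2 => ?_⟩
  rw [max_lt_iff] at h1
  refine ⟨hb2 ⟨h1.1, h2⟩, ?_⟩
  refine Metric.isClosed_closedBall.mem_of_tendsto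
    (tendsto_leftL_aux hx ⟨h1.2, h2.le.trans ht.2⟩) ?_
  filter_upwards [Ioo_mem_nhdsLT h1.1] with y hy
  exact hb2 ⟨hy.1, hy.2.trans h2⟩

lemma right_close_aux {T : ℝ} {x : ℝ → ℝ} (hx : IsCadlagOn T x) {t₀ : ℝ} (ht : t₀ ∈ Set.Ico 0 T)
    {ε : ℝ} (hε : 0 < ε) : ∃ b > t₀, ∀ t, t₀ < t → t < b →
      x t ∈ Metric.closedBall (x t₀) ε ∧ leftL x t ∈ Metric.closedBall (x t₀) ε := by
  have hl := (hx.1 t₀ ht).mono_left (nhdsWithin_mono _ Ioi_subset_Ici_self)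
  obtain ⟨b, hb, hb2⟩ := (mem_nhdsGT_iff_exists_Ioo_subset).1
    (hl.eventually (Metric.closedBall_mem_nhds _ hε))
  refine ⟨min b T, lt_min hb ht.2, fun t h1 h2 => ?_⟩
  rw [lt_min_iff] at h2
  refine ⟨hb2 ⟨h1, h2.1⟩, ?_⟩
  refine Metric.isClosed_closedBall.mem_of_tendsto
    (tendsto_leftL_aux hx ⟨ht.1.trans_lt h1, h2.2.le⟩) ?_
  filter_upwards [Ioo_mem_nhdsLT h1] with y hy
  exact hb2 ⟨hy.1, hy.2.trans h2.1⟩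

lemma param_aux {T : ℝ} (hT : 0 < T) {x : ℝ → ℝ} (hx : IsCadlagOn T x)
    {A B r : ℝ → ℝ} {c : ℝ} (hc : 0 < c) (hAB : ∀ t, A t ≤ B t)
    (hgap : ∀ t t', t < t' → B t + c * (t' - t) ≤ A t')
    (hA : ∀ s, A (r s) ≤ s) (hB : ∀ s, s ≤ B (r s))
    (hA0 : A 0 = 0) (hBT : B T = 1)
    (hjump : ∀ t ∈ Set.Ioc 0 T, leftL x t ≠ x t → A t < B t) :
    Monotone r ∧ LipschitzWith (Real.toNNReal c⁻¹) r ∧ ∃ u, IsParamRep T x u r := by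
  have hmono : Monotone r := by
    intro s s' h
    by_contra hlt
    push Not at hlt
    have h1 := hgap _ _ hlt
    have h2 := mul_pos hc (sub_pos.2 hlt)
    linarith [hA s, hB s']
  have hlip : LipschitzWith (Real.toNNReal c⁻¹) r := by
    apply LipschitzWith.of_le_add_mul'
    intro s s'
    rcases le_or_gt (r s) (r s') with h | h
    · have : 0 ≤ c⁻¹ * dist s s' := by positivity
      linarith
    · have h1 := hgap _ _ h
      have h3 : c * (r s - r s') ≤ dist s s' := by
        rw [Real.dist_eq]
        linarith [le_abs_self (s - s'), hA s, hB s']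
      have h4 : r s - r s' ≤ c⁻¹ * dist s s' := by
        rw [inv_mul_eq_div, le_div_iff₀ hc]
        linarith
      linarith
  have huniq : ∀ s t, A t ≤ s → s ≤ B t → r s = t := by
    intro s t h1 h2
    rcases lt_trichotomy (r s) t with h | h | h
    · have := hgap _ _ h
      have := mul_pos hc (sub_pos.2 h)
      linarith [hB s]
    · exact h
    · have := hgap _ _ h
      have := mul_pos hc (sub_pos.2 h)
      linarith [hA s]
  have hBT' : A T ≤ 1 := hBT ▸ hAB T
  have hr0 : r 0 = 0 := huniq 0 0 hA0.le (hA0.symm.le.trans (hAB 0))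
  have hr1 : r 1 = T := huniq 1 T hBT' hBT.ge
  have hAnn : ∀ t, 0 ≤ t → 0 ≤ A t := by
    intro t ht
    rcases ht.eq_or_lt with rfl | h
    · exact hA0.ge
    · have := hgap _ _ h
      have := mul_pos hc (sub_pos.2 h)
      linarith [hAB 0]
  have hBle : ∀ t, t ≤ T → B t ≤ 1 := by
    intro t ht
    rcases ht.eq_or_lt with rfl | h
    · exact hBT.le
    · have := hgap _ _ h
      have := mul_pos hc (sub_pos.2 h)
      linarith [hAB T]
  have hrmem : ∀ s ∈ Set.Icc (0:ℝ) 1, r s ∈ Set.Icc 0 T := fun s hs =>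
    ⟨hr0 ▸ hmono hs.1, hr1 ▸ hmono hs.2⟩
  have hnj : ∀ t ∈ Set.Icc 0 T, A t = B t → leftL x t = x t := by
    intro t ht h
    by_contra hne
    rcases ht.1.eq_or_lt with rfl | h0
    · exact hne (leftL_zero_aux x)
    · exact (hjump t ⟨h0, ht.2⟩ hne).ne h
  set u : ℝ → ℝ := fun s => leftL x (r s) +
    ((s - A (r s)) / (B (r s) - A (r s))) * (x (r s) - leftL x (r s)) with hu
  have hseg : ∀ s, u s ∈ segment ℝ (leftL x (r s)) (x (r s)) := by
    intro s
    rw [segment_eq_image']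
    refine ⟨(s - A (r s)) / (B (r s) - A (r s)), ⟨?_, ?_⟩, ?_⟩
    · exact div_nonneg (sub_nonneg.2 (hA s)) (sub_nonneg.2 (hAB _))
    · exact div_le_one_of_le₀ (by linarith [hB s]) (sub_nonneg.2 (hAB _))
    · simp [hu]
  have huA : ∀ t, ∀ s, A t = s → u s = leftL x t := by
    rintro t s rfl
    have : r (A t) = t := huniq _ _ le_rfl (hAB t)
    simp [hu, this]
  have huB : ∀ t ∈ Set.Icc 0 T, ∀ s, s = B t → u s = x t := by
    rintro t ht s rfl
    have hr : r (B t) = t := huniq _ _ (hAB t) le_rfl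
    rcases (hAB t).eq_or_lt with h | h
    · rw [huA t _ h, hnj t ht h]
    · simp only [hu, hr]
      rw [div_self (sub_pos.2 h).ne']
      ring
  have haff : ∀ t s, A t ≤ s → s ≤ B t →
      u s = leftL x t + ((s - A t) / (B t - A t)) * (x t - leftL x t) := by
    intro t s h1 h2
    simp only [hu, huniq s t h1 h2]
  have hrc : Continuous r := hlip.continuous
  refine ⟨hmono, hlip, u, ?_, hrc.continuousOn, hmono.monotoneOn _, hr0, hr1,
    fun s _ => hseg s, ?_, ?_⟩
  · intro s₀ hs₀
    have ht₀ := hrmem s₀ hs₀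
    set t₀ := r s₀ with ht₀def
    have hcaff : Continuous fun s : ℝ =>
      leftL x t₀ + ((s - A t₀) / (B t₀ - A t₀)) * (x t₀ - leftL x t₀) := by fun_prop
    have hsplit : Set.Icc (0:ℝ) 1 = Set.Icc 0 s₀ ∪ Set.Icc s₀ 1 :=
      (Icc_union_Icc_eq_Icc hs₀.1 hs₀.2).symm
    rw [hsplit]
    apply ContinuousWithinAt.union
    · rcases (hA s₀).eq_or_lt with h | h
      · rw [Metric.continuousWithinAt_iff']
        intro ε hε
        rw [huA t₀ s₀ h]
        rcases ht₀.1.eq_or_lt with h0 | h0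
        · filter_upwards [self_mem_nhdsWithin] with s hs
          have : s = s₀ := by
            have : s₀ = 0 := by rw [← h, ← ht₀def, ← h0, hA0]
            linarith [hs.1, hs.2]
          rw [this, huA t₀ s₀ h, dist_self]
          exact hε
        · obtain ⟨b, hb, hb2⟩ := left_close_aux hx ⟨h0, ht₀.2⟩ (half_pos hε)
          have hev : ∀ᶠ s in 𝓝[Set.Icc 0 s₀] s₀, b < r s :=
            (hrc.tendsto s₀).mono_left nhdsWithin_le_nhds |>.eventually_const_lt hb
          filter_upwards [self_mem_nhdsWithin, hev] with s hs hbs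
          rcases hs.2.eq_or_lt with rfl | hlt
          · rw [huA t₀ s h, dist_self]
            exact hε
          · have hrs : r s < t₀ := by
              refine lt_of_le_of_ne (hmono hs.2) fun he => ?_
              have := hA s
              rw [he] at this
              linarith
            obtain ⟨h1, h2⟩ := hb2 _ hbs hrs
            have := (convex_closedBall _ _).segment_subset h2 h1 (hseg s)
            rw [Metric.mem_closedBall] at this
            linarith
      · refine hcaff.continuousWithinAt.congr_of_eventuallyEq ?_ (haff t₀ s₀ (hA s₀) (hB s₀))
        have : ∀ᶠ s in 𝓝[Set.Icc 0 s₀] s₀, A t₀ < s :=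
          nhdsWithin_le_nhds (lt_mem_nhds h)
        filter_upwards [self_mem_nhdsWithin, this] with s hs hbs
        exact haff t₀ s hbs.le (hs.2.trans (hB s₀))
    · rcases (hB s₀).eq_or_lt with h | h
      · rw [Metric.continuousWithinAt_iff']
        intro ε hε
        rw [huB t₀ ht₀ s₀ h]
        rcases ht₀.2.eq_or_lt with h0 | h0
        · filter_upwards [self_mem_nhdsWithin] with s hs
          have : s = s₀ := by
            have : s₀ = 1 := by rw [h, ← ht₀def, h0, hBT]
            linarith [hs.1, hs.2]
          rw [this, huB t₀ ht₀ s₀ h, dist_self]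
          exact hε
        · obtain ⟨b, hb, hb2⟩ := right_close_aux hx ⟨ht₀.1, h0⟩ (half_pos hε)
          have hev : ∀ᶠ s in 𝓝[Set.Icc s₀ 1] s₀, r s < b :=
            (hrc.tendsto s₀).mono_left nhdsWithin_le_nhds |>.eventually_lt_const hb
          filter_upwards [self_mem_nhdsWithin, hev] with s hs hbs
          rcases hs.1.eq_or_lt with rfl | hlt
          · rw [huB t₀ ht₀ _ h, dist_self]
            exact hε
          · have hrs : t₀ < r s := by
              refine lt_of_le_of_ne (hmono hs.1) fun he => ?_
              have := hB s
              rw [← he] at this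
              linarith
            obtain ⟨h1, h2⟩ := hb2 _ hrs hbs
            have := (convex_closedBall _ _).segment_subset h2 h1 (hseg s)
            rw [Metric.mem_closedBall] at this
            linarith
      · refine hcaff.continuousWithinAt.congr_of_eventuallyEq ?_ (haff t₀ s₀ (hA s₀) (hB s₀))
        have : ∀ᶠ s in 𝓝[Set.Icc s₀ 1] s₀, s < B t₀ :=
          nhdsWithin_le_nhds (gt_mem_nhds h)
        filter_upwards [self_mem_nhdsWithin, this] with s hs hbs
        exact haff t₀ s ((hA s₀).trans hs.1) hbs.le
  · intro t ht v hv
    have hA0' := hAnn t ht.1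
    have hB1' := hBle t ht.2
    rcases (hAB t).eq_or_lt with h | h
    · rw [hnj t ht h, segment_same, mem_singleton_iff] at hv
      refine ⟨A t, ⟨hA0', h ▸ hB1'⟩, huniq _ _ le_rfl (hAB t), ?_⟩
      rw [huA t _ rfl, hnj t ht h, hv]
    · rw [segment_eq_image'] at hv
      obtain ⟨θ, hθ, rfl⟩ := hv
      have h1 : A t ≤ A t + θ * (B t - A t) := by
        have := mul_nonneg hθ.1 (sub_pos.2 h).le
        linarith
      have h2 : A t + θ * (B t - A t) ≤ B t := by
        have := mul_le_mul_of_nonneg_right hθ.2 (sub_pos.2 h).le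
        linarith
      refine ⟨A t + θ * (B t - A t), ⟨hA0'.trans h1, h2.trans hB1'⟩, huniq _ _ h1 h2, ?_⟩
      rw [haff t _ h1 h2, add_sub_cancel_left, mul_div_cancel_right₀ _ (sub_pos.2 h).ne']
      simp
  · intro s₁ _ s₂ _ h12 hr
    have e : (u s₂ - u s₁) * (x (r s₁) - leftL x (r s₁)) =
        ((s₂ - s₁) / (B (r s₁) - A (r s₁))) * (x (r s₁) - leftL x (r s₁)) ^ 2 := by
      simp only [hu, ← hr]
      ring
    rw [e]
    exact mul_nonneg (div_nonneg (sub_nonneg.2 h12) (sub_nonneg.2 (hAB _))) (sq_nonneg _)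

/-- Lemma 4.3: every càdlàg function on `[0,T]` has a parametric representation
whose time component is absolutely continuous with derivative in `[0, 2T]` a.e. -/
theorem exists_absolutely_continuous_time_component
    (T : ℝ) (hT : 0 < T) (x : ℝ → ℝ) (hx : IsCadlagOn T x) :
    ∃ u r r' : ℝ → ℝ, IsParamRep T x u r ∧ AbsContOn01 r r' ∧
      ∀ᵐ s ∂(MeasureTheory.volume.restrict (Set.Icc (0:ℝ) 1)),
        0 ≤ r' s ∧ r' s ≤ 2 * T := by
  obtain ⟨f, C, hf, hf0, hfT, hC, hfj⟩ := exists_jump_fun_aux (T := T) _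
    (jump_countable_aux hx) (fun t ht => ht.1)
  have hfnn : ∀ t, 0 ≤ f t := fun t => by
    rw [← hf0 (min t 0) (min_le_right _ _)]
    exact hf (min_le_left _ _)
  have hfC : ∀ t, f t ≤ C := fun t => by
    rw [← hfT (max t T) (le_max_right _ _)]
    exact hf (le_max_left _ _)
  have hcpos : 0 < (1 - C) / T := div_pos (by linarith) hT
  choose r hA hB using exists_inv_aux f hf C hfnn hfC ((1 - C) / T) hcpos
  have hl0 : Function.leftLim f 0 = 0 := by
    apply leftLim_eq_of_tendsto
    refine tendsto_const_nhds.congr' ?_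
    filter_upwards [self_mem_nhdsWithin] with t ht
    exact (hf0 t (mem_Iio.1 ht).le).symm
  have hrT : Function.rightLim f T = C := by
    apply rightLim_eq_of_tendsto
    refine tendsto_const_nhds.congr' ?_
    filter_upwards [self_mem_nhdsWithin] with t ht
    exact (hfT t (mem_Ioi.1 ht).le).symm
  obtain ⟨hmono, hlip, u, hu⟩ := param_aux hT hx (A := fun t => (1 - C) / T * t + Function.leftLim f t)
    (B := fun t => (1 - C) / T * t + Function.rightLim f t) (r := r) hcpos
    (fun t => by
      have := hf.leftLim_le_rightLim (le_refl t)
      linarith)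
    (fun t t' h => by
      have := hf.rightLim_le_leftLim h
      linarith)
    hA hB (by simp [hl0]) (by
      rw [hrT, div_mul_cancel₀ _ hT.ne']
      ring)
    (fun t ht hne => by
      have := hfj t ⟨ht, hne⟩
      linarith)
  have hac : ∀ s, AbsolutelyContinuousOnInterval r 0 s := fun s =>
    (hlip.lipschitzOnWith (s := uIcc 0 s)).absolutelyContinuousOnInterval
  refine ⟨u, r, deriv r, hu, ⟨(hac 1).intervalIntegrable_deriv, fun s _ => ?_⟩,
    Eventually.of_forall fun s => ⟨hmono.deriv_nonneg, ?_⟩⟩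
  · rw [(hac s).integral_deriv_eq_sub]
    ring
  · have h1 := norm_deriv_le_of_lipschitz hlip (x₀ := s)
    rw [Real.coe_toNNReal _ (inv_pos.2 hcpos).le] at h1
    refine (le_abs_self _).trans (h1.trans ?_)
    rw [inv_div, div_le_iff₀ (by linarith)]
    nlinarith
end
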